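/- (Symplectic permutations, rotation) Let r be a positive integer and m = 2r. Let θ be the 2^{2r} × 2^{2r} permutation matrix defined on canonical basis vectors by θ e_{(v₁,v₂)} = e_{(v₂+1_r, v₁)} for v₁, v₂ ∈ (ℤ/2)^r, where 1_r is the all-ones r-tuple (θ realizes clockwise 90° rotation of a columnwise-vectorized 2^r × 2^r image). Then for all a₁, a₂, b₁, b₂ ∈ (ℤ/2)^r, θ^{-1} D((a₁,a₂),(b₁,b₂)) θ = (-1)^{1_r·b₁} D((a₂,a₁),(b₂,b₁)), where (a₁,a₂) denotes the concatenation of a₁ and a₂ into a binary 2r-tuple and 1_r·b₁ is the mod-2 inner product. -/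

import Mathlib

open Matrix

/-- Mod-2 inner product of binary tuples. -/
def bip {I : Type*} [Fintype I] (a b : I → ZMod 2) : ZMod 2 := ∑ i, a i * b i

/-- The sign `(-1)^ε` for `ε ∈ ℤ/2`: `1` if `ε = 0`, `-1` if `ε = 1`. -/
noncomputable def sgn (x : ZMod 2) : ℝ := (-1 : ℝ) ^ x.val

/-- The binary Heisenberg-Weyl signed permutation matrix `D(a,b)`
(equivalently the iterated Kronecker product of the `X^{a_i} Z^{b_i}`), with entries
`D(a,b)_{u,v} = (-1)^{b·v}` if `u = v + a` and `0` otherwise. -/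
noncomputable def Dmat {I : Type*} [Fintype I] [DecidableEq I] (a b : I → ZMod 2) :
    Matrix (I → ZMod 2) (I → ZMod 2) ℝ :=
  Matrix.of fun u v => if u = v + a then sgn (bip b v) else 0

/-- Concatenation of two binary `r`-tuples into a binary `2r`-tuple. -/
def cat2 {r : ℕ} (v₁ v₂ : Fin r → ZMod 2) : (Fin r ⊕ Fin r) → ZMod 2 :=
  Sum.elim v₁ v₂

/-- The permutation matrix `θ` with `θ e_{(v₁,v₂)} = e_{(v₂+1_r, v₁)}`, realizing
clockwise 90° rotation of a columnwise-vectorized `2^r × 2^r` image. -/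
noncomputable def theta (r : ℕ) :
    Matrix ((Fin r ⊕ Fin r) → ZMod 2) ((Fin r ⊕ Fin r) → ZMod 2) ℝ :=
  Matrix.of fun u v =>
    if u = cat2 (fun i => v (Sum.inr i) + 1) (fun i => v (Sum.inl i)) then 1 else 0

/-!
Conjugation by a permutation matrix relabels rows and columns. The relabelling behind `θ` swaps the
two halves of an index and then flips every bit of the first half. Permuting coordinates permutes
`a` and `b` alike, since `u = v + a` and `b · v` are stable under it; translating all indices by `c`
leaves `u = v + a` unchanged and adds `b · c` to `b · v`, which is the sign in the theorem.
-/

section PermMatrix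

variable {n R : Type*} [DecidableEq n]

theorem permMatrix_inv_apply [Zero R] [One R] (σ : Equiv.Perm n) (u v : n) :
    σ⁻¹.permMatrix R u v = if u = σ v then 1 else 0 := by
  simp only [PEquiv.toMatrix_apply, Equiv.toPEquiv_apply, Option.mem_some_iff,
    Equiv.Perm.inv_eq_iff_eq]

variable [Fintype n] [CommRing R]

theorem inv_permMatrix (σ : Equiv.Perm n) : (σ.permMatrix R)⁻¹ = σ⁻¹.permMatrix R :=
  Matrix.inv_eq_left_inv <| by rw [← Matrix.permMatrix_mul, mul_inv_cancel, Matrix.permMatrix_one]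

theorem inv_permMatrix_mul_mul_permMatrix (σ : Equiv.Perm n) (M : Matrix n n R) :
    (σ.permMatrix R)⁻¹ * M * σ.permMatrix R = M.submatrix σ.symm σ.symm := by
  rw [inv_permMatrix, PEquiv.toMatrix_toPEquiv_mul, PEquiv.mul_toMatrix_toPEquiv,
    Matrix.submatrix_submatrix]
  rfl

end PermMatrix

theorem sgn_add (x y : ZMod 2) : sgn (x + y) = sgn x * sgn y := by
  rw [sgn, ZMod.val_add, ← neg_one_pow_eq_pow_mod_two, pow_add, sgn, sgn]

section HeisenbergWeyl

variable {I J : Type*} [Fintype I] [Fintype J]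

theorem bip_eq_dotProduct (a b : I → ZMod 2) : bip a b = a ⬝ᵥ b := rfl

theorem bip_cat2 {r : ℕ} (a₁ a₂ b₁ b₂ : Fin r → ZMod 2) :
    bip (cat2 a₁ a₂) (cat2 b₁ b₂) = bip a₁ b₁ + bip a₂ b₂ :=
  sumElim_dotProduct_sumElim a₁ b₁ a₂ b₂

variable [DecidableEq I] [DecidableEq J]

theorem Dmat_submatrix_comp_equiv (e : I ≃ J) (a b : I → ZMod 2) :
    (Dmat a b).submatrix (· ∘ e) (· ∘ e) = Dmat (a ∘ e.symm) (b ∘ e.symm) := by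
  ext u v
  have support_iff : u ∘ e = v ∘ e + a ↔ u = v + a ∘ e.symm := by
    rw [← e.eq_comp_symm, Pi.add_comp, Function.comp_assoc, e.self_comp_symm, Function.comp_id]
  have phase_eq : bip b (v ∘ e) = bip (b ∘ e.symm) v :=
    (comp_equiv_symm_dotProduct b v e).symm
  simp only [Dmat, Matrix.submatrix_apply, Matrix.of_apply, support_iff, phase_eq]

theorem Dmat_submatrix_add_right (a b c : I → ZMod 2) :
    (Dmat a b).submatrix (· + c) (· + c) = sgn (bip c b) • Dmat a b := by
  ext u v
  have support_iff : u + c = v + c + a ↔ u = v + a := by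
    rw [add_right_comm, add_left_inj]
  have phase_eq : bip b (v + c) = bip c b + bip b v := by
    rw [bip_eq_dotProduct, dotProduct_add, dotProduct_comm b c, add_comm]
    rfl
  simp only [Dmat, Matrix.submatrix_apply, Matrix.smul_apply, Matrix.of_apply, support_iff,
    phase_eq, sgn_add, smul_eq_mul, mul_ite, mul_zero]

end HeisenbergWeyl

section Rotation

/-- The index permutation `(v₁, v₂) ↦ (v₂ + 1_r, v₁)` underlying `theta`, encoded as the exchange of
the two halves (transposition of the image) followed by translation by `(1_r, 0)` (a reflection). -/
def rotationPerm (r : ℕ) : Equiv.Perm ((Fin r ⊕ Fin r) → ZMod 2) :=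
  ((Equiv.sumComm _ _).arrowCongr (Equiv.refl _)).trans (Equiv.addRight (cat2 1 0))

variable {r : ℕ}

theorem rotationPerm_apply (v : (Fin r ⊕ Fin r) → ZMod 2) :
    rotationPerm r v = v ∘ Equiv.sumComm _ _ + cat2 1 0 := rfl

theorem theta_eq_permMatrix_rotationPerm_inv : theta r = (rotationPerm r)⁻¹.permMatrix ℝ := by
  ext u v
  have rotationPerm_eq_cat2 :
      rotationPerm r v = cat2 (fun i => v (.inr i) + 1) (fun i => v (.inl i)) := by
    ext (i | i) <;> simp [rotationPerm_apply, cat2]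
  rw [theta, Matrix.of_apply, permMatrix_inv_apply, rotationPerm_eq_cat2]

theorem inv_theta_mul_mul_theta
    (M : Matrix ((Fin r ⊕ Fin r) → ZMod 2) ((Fin r ⊕ Fin r) → ZMod 2) ℝ) :
    (theta r)⁻¹ * M * theta r = M.submatrix (rotationPerm r) (rotationPerm r) := by
  rw [theta_eq_permMatrix_rotationPerm_inv, inv_permMatrix_mul_mul_permMatrix,
    Equiv.Perm.inv_def, Equiv.symm_symm]

theorem Dmat_submatrix_rotationPerm (a b : (Fin r ⊕ Fin r) → ZMod 2) :
    (Dmat a b).submatrix (rotationPerm r) (rotationPerm r) =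
      sgn (bip (cat2 1 0) b) • Dmat (a ∘ Equiv.sumComm _ _) (b ∘ Equiv.sumComm _ _) :=
  calc
    (Dmat a b).submatrix (rotationPerm r) (rotationPerm r)
      = ((Dmat a b).submatrix (· + cat2 1 0) (· + cat2 1 0)).submatrix
          (· ∘ Equiv.sumComm _ _) (· ∘ Equiv.sumComm _ _) := rfl
    _ = sgn (bip (cat2 1 0) b) •
          (Dmat a b).submatrix (· ∘ Equiv.sumComm _ _) (· ∘ Equiv.sumComm _ _) := by
      rw [Dmat_submatrix_add_right, Matrix.submatrix_smul]
      rfl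
    _ = sgn (bip (cat2 1 0) b) • Dmat (a ∘ Equiv.sumComm _ _) (b ∘ Equiv.sumComm _ _) := by
      rw [Dmat_submatrix_comp_equiv, Equiv.sumComm_symm]

theorem cat2_comp_sumComm (v₁ v₂ : Fin r → ZMod 2) :
    cat2 v₁ v₂ ∘ Equiv.sumComm _ _ = cat2 v₂ v₁ :=
  Sum.elim_swap

end Rotation

/-- Symplectic permutations, rotation:
`θ⁻¹ D((a₁,a₂),(b₁,b₂)) θ = (-1)^{1_r·b₁} D((a₂,a₁),(b₂,b₁))`. -/
theorem weyl_rotation_symplectic {r : ℕ} (hr : 0 < r) (a₁ a₂ b₁ b₂ : Fin r → ZMod 2) :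
    (theta r)⁻¹ * Dmat (cat2 a₁ a₂) (cat2 b₁ b₂) * theta r =
      sgn (bip (fun _ => 1) b₁) • Dmat (cat2 a₂ a₁) (cat2 b₂ b₁) := by
  have phase_eq : bip (cat2 1 0) (cat2 b₁ b₂) = bip (fun _ => 1) b₁ := by
    rw [bip_cat2, bip_eq_dotProduct 0, zero_dotProduct, add_zero]
    rfl
  rw [inv_theta_mul_mul_theta, Dmat_submatrix_rotationPerm, phase_eq, cat2_comp_sumComm,
    cat2_comp_sumComm]
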